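/- Suppose d | e | q^r−1 with gcd(d, e/d) = 1, and |S(A,χ)| ≤ K for every nontrivial multiplicative character χ of order dividing q^r−1. Then |N(e,A) − ρ(e/d)·N(d,A)| ≤ ρ(e)·(W(e) − W(d))·K. -/

import Mathlib

/-- γ is `e`-free: γ = β^d with d ∣ e implies d = 1. -/
def IsFreeElt {F : Type*} [Field F] (e : ℕ) (γ : Fˣ) : Prop :=
  ∀ (β : Fˣ) (d : ℕ), d ∣ e → γ = β ^ d → d = 1

/-- The number of `e`-free elements of `A`. -/
noncomputable def nFree {F : Type*} [Field F] (e : ℕ) (A : Set Fˣ) : ℕ :=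
  {γ ∈ A | IsFreeElt e γ}.ncard

/-!
A unit `γ` fails to be `e`-free exactly when it is a `p`-th power for some prime `p ∣ e`, and by
duality `γ` is a `p`-th power iff all characters `χ` with `χ ^ p = 1` take the value `1` at `γ`.
Let `c m` be the average of `χ γ` over the characters `χ` of order `m`. When `p` divides the order
of the character group, `c p` is `1` or `-1 / (p - 1)` according to whether `γ` is a `p`-th power,
and `c` is multiplicative, so multiplying `(1 - 1 / p) * (1 - c p)` over the primes `p ∣ e` yields
Vinogradov's formula: the indicator of `e`-freeness at `γ` is `ρ(e) * ∑ m ∣ rad e, μ m * c m`.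
Summing over `A` and using `ρ(e) = ρ(e/d) * ρ(d)`, the terms with `m ∣ d` cancel. The remaining
`W(e) - W(d)` terms are averages of sums `S(A, χ)`, each of absolute value at most `K`.
-/

open Finset ArithmeticFunction UniqueFactorizationMonoid
open scoped BigOperators ArithmeticFunction.Moebius

section FiniteGroup

variable {G : Type*}

theorem mul_pow_eq_left_of_modEq [CommGroup G] {x y : G} {k : ℕ} (hx : k ≡ 1 [MOD orderOf x])
    (hy : k ≡ 0 [MOD orderOf y]) : (x * y) ^ k = x := by
  rw [mul_pow, pow_eq_pow_iff_modEq.2 hx, pow_eq_pow_iff_modEq.2 hy, pow_one, pow_zero, mul_one]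

theorem orderOf_pow_eq_left_of_modEq [Group G] [Finite G] {z : G} {m n k : ℕ}
    (hmn : m.Coprime n) (hz : orderOf z = m * n) (hm : k ≡ 1 [MOD m]) (hn : k ≡ 0 [MOD n]) :
    orderOf (z ^ k) = m := by
  have hpos : 0 < m * n := hz ▸ orderOf_pos z
  have hgcd : (m * n).gcd k = n := by
    rw [Nat.gcd_comm, hmn.gcd_mul, hm.gcd_eq, Nat.gcd_one_left, one_mul, hn.gcd_eq,
      Nat.gcd_zero_left]
  rw [orderOf_pow, hz, hgcd, Nat.mul_div_cancel _ (Nat.pos_of_mul_pos_left hpos)]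

theorem sum_orderOf_eq_prime {R : Type*} [Monoid G] [Fintype G] [DecidableEq G] [AddCommGroup R]
    (f : G → R) {p : ℕ} (hp : p.Prime) :
    ∑ x with orderOf x = p, f x = ∑ x with x ^ p = 1, f x - f 1 := by
  have : Fact p.Prime := ⟨hp⟩
  have hfilter : ({x | orderOf x = p} : Finset G) = ({x | x ^ p = 1} : Finset G).erase 1 := by
    ext x
    simp only [mem_filter_univ, mem_erase, orderOf_eq_prime_iff, and_comm]
  rw [hfilter, sum_erase_eq_sub (by simp)]

theorem sum_pow_eq_one_eq_zero {R : Type*} [CommGroup G] [Fintype G] [DecidableEq G] [Ring R]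
    [IsDomain R] (f : G →* R) {n : ℕ} {a : G} (ha : a ^ n = 1) (hfa : f a ≠ 1) :
    ∑ x with x ^ n = 1, f x = 0 := by
  have hshift : f a * ∑ x with x ^ n = 1, f x = ∑ x with x ^ n = 1, f x := by
    simp only [mul_sum, ← map_mul]
    exact sum_equiv (Equiv.mulLeft a) (by simp [mul_pow, ha]) (by simp)
  exact (mul_left_eq_self₀.1 hshift).resolve_left hfa

end FiniteGroup

section Totient

variable {R : Type*} [Field R]

theorem totient_div_self_eq_prod [CharZero R] {n : ℕ} (hn : n ≠ 0) :
    (n.totient : R) / n = ∏ p ∈ n.primeFactors, (1 - (p : R)⁻¹) := by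
  rw [div_eq_iff (Nat.cast_ne_zero.2 hn), mul_comm]
  simpa using congrArg (Rat.cast : ℚ → R) (Nat.totient_eq_mul_prod_factors n)

theorem totient_div_self_mul_of_coprime {a b : ℕ} (h : a.Coprime b) :
    ((a * b).totient : R) / (a * b : ℕ) = (a.totient : R) / a * ((b.totient : R) / b) := by
  rw [Nat.totient_mul h, Nat.cast_mul, Nat.cast_mul, mul_div_mul_comm]

end Totient

section Radical

theorem card_divisors_radical (n : ℕ) : #(radical n).divisors = 2 ^ #n.primeFactors := by
  rw [Nat.card_divisors radical_ne_zero, Nat.primeFactors_radical]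
  refine prod_eq_pow_card fun p hp => ?_
  rw [← Nat.primeFactors_radical] at hp
  rw [Nat.factorization_eq_one_of_squarefree squarefree_radical
    (Nat.prime_of_mem_primeFactors hp) (Nat.dvd_of_mem_primeFactors hp)]

theorem card_divisors_radical_sdiff {d e : ℕ} (hde : d ∣ e) (he : e ≠ 0) :
    (#((radical e).divisors \ (radical d).divisors) : ℝ) =
      2 ^ #e.primeFactors - 2 ^ #d.primeFactors := by
  rw [cast_card_sdiff (Nat.divisors_subset_of_dvd radical_ne_zero (radical_dvd_radical hde he)),
    card_divisors_radical, card_divisors_radical, Nat.cast_pow, Nat.cast_pow, Nat.cast_two]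

theorem mem_divisors_radical_sdiff {d e m : ℕ} (hd : d ≠ 0) :
    m ∈ (radical e).divisors \ (radical d).divisors ↔ m ∣ radical e ∧ ¬ m ∣ d := by
  simp only [mem_sdiff, Nat.mem_divisors, radical_ne_zero, ne_eq, not_false_eq_true, and_true]
  refine and_congr_right fun hm => not_congr ?_
  exact dvd_radical_iff (squarefree_radical.squarefree_of_dvd hm).isRadical hd

end Radical

section OrderMean

variable {G R : Type*} [CommGroup G] [Fintype G] [Field R] [CharZero R]

/-- The average of `f` over the elements of order `m`, as an arithmetic function of `m`. It is `0`
when no element has order `m`. -/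
noncomputable def orderMean (f : G →* R) : ArithmeticFunction R where
  toFun m := 𝔼 x : G with orderOf x = m, f x
  map_zero' := by simp [(isOfFinOrder_of_finite _).orderOf_pos.ne']

theorem orderMean_apply (f : G →* R) (m : ℕ) :
    orderMean f m = 𝔼 x : G with orderOf x = m, f x := rfl

theorem orderMean_one (f : G →* R) : orderMean f 1 = 1 := by
  have hfilter : ({x | orderOf x = 1} : Finset G) = {1} := by
    ext x
    simp only [mem_filter_univ, orderOf_eq_one_iff, mem_singleton]
  rw [orderMean_apply, hfilter, expect_singleton, map_one]

theorem isMultiplicative_orderMean (f : G →* R) : (orderMean f).IsMultiplicative := by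
  classical
  refine ⟨orderMean_one f, fun {m n} hmn => ?_⟩
  obtain ⟨k, hkm, hkn⟩ := Nat.chineseRemainder hmn 1 0
  obtain ⟨l, hlm, hln⟩ := Nat.chineseRemainder hmn 0 1
  simp only [orderMean_apply, expect_mul_expect, ← expect_product']
  refine (expect_nbij' (fun x => x.1 * x.2) (fun z => (z ^ k, z ^ l)) ?_ ?_ ?_ ?_ ?_).symm
  · rintro ⟨x, y⟩ h
    simp only [mem_product, mem_filter_univ] at h ⊢
    obtain ⟨rfl, rfl⟩ := h
    exact (Commute.all x y).orderOf_mul_eq_mul_orderOf_of_coprime hmn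
  · intro z hz
    simp only [mem_product, mem_filter_univ] at hz ⊢
    exact ⟨orderOf_pow_eq_left_of_modEq hmn hz hkm hkn,
      orderOf_pow_eq_left_of_modEq hmn.symm (hz.trans (mul_comm m n)) hln hlm⟩
  · rintro ⟨x, y⟩ h
    simp only [mem_product, mem_filter_univ] at h ⊢
    obtain ⟨rfl, rfl⟩ := h
    rw [mul_pow_eq_left_of_modEq hkm hkn, mul_comm, mul_pow_eq_left_of_modEq hln hlm]
  · intro z hz
    rw [mem_filter_univ] at hz
    have hkl : k + l ≡ 1 [MOD orderOf z] := by
      rw [hz, ← Nat.modEq_and_modEq_iff_modEq_mul hmn]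
      exact ⟨hkm.add hlm, hkn.add hln⟩
    rw [← pow_add, pow_eq_pow_iff_modEq.2 hkl, pow_one]
  · simp only [map_mul, implies_true]

theorem one_sub_inv_mul_one_sub_orderMean [IsCyclic G] (f : G →* R) {p : ℕ} (hp : p.Prime)
    (hpG : p ∣ Fintype.card G) [Decidable (∃ x, x ^ p = 1 ∧ f x ≠ 1)] :
    (1 - (p : R)⁻¹) * (1 - orderMean f p) = if ∃ x, x ^ p = 1 ∧ f x ≠ 1 then 1 else 0 := by
  have hcard : #{x : G | orderOf x = p} = p - 1 := by
    rw [IsCyclic.card_orderOf_eq_totient hpG, Nat.totient_prime hp]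
  split_ifs with h
  · classical
    obtain ⟨a, ha, hfa⟩ := h
    have hp0 : (p : R) ≠ 0 := mod_cast hp.ne_zero
    have hp1 : (p : R) - 1 ≠ 0 := sub_ne_zero.2 (mod_cast hp.ne_one)
    rw [orderMean_apply, expect_eq_sum_div_card, sum_orderOf_eq_prime _ hp,
      sum_pow_eq_one_eq_zero f ha hfa, map_one, hcard, Nat.cast_pred hp.pos]
    field_simp
    ring
  · have hf : ∀ x ∈ ({x | orderOf x = p} : Finset G), f x = 1 := by
      intro x hx
      rw [mem_filter_univ] at hx
      by_contra hfx
      exact h ⟨x, hx ▸ pow_orderOf_eq_one x, hfx⟩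
    have hne : ({x | orderOf x = p} : Finset G).Nonempty :=
      card_pos.1 (hcard ▸ Nat.sub_pos_of_lt hp.one_lt)
    rw [orderMean_apply, expect_congr rfl hf, expect_const hne, sub_self, mul_zero]

theorem totient_div_self_mul_sum_moebius_mul_orderMean [IsCyclic G] (f : G →* R) {e : ℕ}
    (he : e ≠ 0) (heG : radical e ∣ Fintype.card G)
    [Decidable (∀ p ∈ e.primeFactors, ∃ x, x ^ p = 1 ∧ f x ≠ 1)] :
    (e.totient : R) / e * ∑ m ∈ (radical e).divisors, (μ m : R) * orderMean f m =
      if ∀ p ∈ e.primeFactors, ∃ x, x ^ p = 1 ∧ f x ≠ 1 then 1 else 0 := by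
  classical
  have hlocal : ∀ p ∈ e.primeFactors, (1 - (p : R)⁻¹) * (1 - orderMean f p) =
      if ∃ x, x ^ p = 1 ∧ f x ≠ 1 then 1 else 0 := fun p hp =>
    one_sub_inv_mul_one_sub_orderMean f (Nat.prime_of_mem_primeFactors hp)
      ((Nat.dvd_of_mem_primeFactors (by rwa [Nat.primeFactors_radical])).trans heG)
  rw [← (isMultiplicative_orderMean f).prodPrimeFactors_one_sub_of_squarefree _ squarefree_radical,
    Nat.primeFactors_radical, totient_div_self_eq_prod he, ← prod_mul_distrib,
    prod_congr rfl hlocal, prod_boole]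
  congr

end OrderMean

section MulChar

variable {M R : Type*} [CommMonoid M] [CommRing R]

/-- Evaluation at a unit, as a character of the group of multiplicative characters. -/
def mulCharEval (γ : Mˣ) : MulChar M R →* R where
  toFun χ := χ γ
  map_one' := MulChar.one_apply_coe γ
  map_mul' χ ψ := MulChar.mul_apply χ ψ γ

theorem mulCharEval_apply (γ : Mˣ) (χ : MulChar M R) : mulCharEval γ χ = χ γ := rfl

variable [Finite M] [HasEnoughRootsOfUnity R (Monoid.exponent Mˣ)]

theorem isCyclic_mulChar [IsCyclic Mˣ] : IsCyclic (MulChar M R) :=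
  (MulChar.mulEquiv_units M R).some.isCyclic.2 ‹_›

theorem exists_eq_pow_iff_forall_mulChar (γ : Mˣ) (n : ℕ) :
    (∃ β, γ = β ^ n) ↔ ∀ χ : MulChar M R, χ ^ n = 1 → χ γ = 1 := by
  have hmem : γ ∈ (powMonoidHom n : Mˣ →* Mˣ).range ↔
      ∀ χ ∈ (MulChar.subgroupOrderIsoSubgroupMulChar M R (powMonoidHom n).range).ofDual,
        χ γ = 1 := by
    rw [← MulChar.mem_subgroupOrderIsoSubgroupMulChar_symm_iff, OrderDual.toDual_ofDual,
      OrderIso.symm_apply_apply]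
  simpa [MulChar.ext_iff, MulChar.pow_apply_coe, eq_comm] using hmem

end MulChar

section FreeElements

variable {F : Type*} [Field F]

theorem isFreeElt_iff_forall_primeFactors {e : ℕ} (he : e ≠ 0) (γ : Fˣ) :
    IsFreeElt e γ ↔ ∀ p ∈ e.primeFactors, ¬ ∃ β, γ = β ^ p := by
  constructor
  · rintro h p hp ⟨β, hβ⟩
    exact (Nat.prime_of_mem_primeFactors hp).ne_one
      (h β p (Nat.dvd_of_mem_primeFactors hp) hβ)
  · intro h β k hk hβ
    by_contra hk1
    obtain ⟨p, hp, hpk⟩ := Nat.exists_prime_and_dvd hk1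
    refine h p (Nat.mem_primeFactors.2 ⟨hp, hpk.trans hk, he⟩) ⟨β ^ (k / p), ?_⟩
    rw [← pow_mul, Nat.div_mul_cancel hpk, hβ]

variable [Fintype F] [Fintype (MulChar F ℂ)]

theorem card_mulChar : Fintype.card (MulChar F ℂ) = Fintype.card F - 1 := by
  rw [← Nat.card_eq_fintype_card, MulChar.card_eq_card_units_of_hasEnoughRootsOfUnity,
    Nat.card_units, Nat.card_eq_fintype_card]

theorem nFree_eq_sum_moebius_mul_orderMean (A : Finset Fˣ) {e : ℕ} (he : e ≠ 0)
    (heF : radical e ∣ Fintype.card F - 1) :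
    (nFree e (A : Set Fˣ) : ℂ) = (e.totient : ℂ) / e *
      ∑ m ∈ (radical e).divisors, (μ m : ℂ) * ∑ γ ∈ A, orderMean (mulCharEval γ) m := by
  classical
  have : IsCyclic (MulChar F ℂ) := isCyclic_mulChar
  have hindicator (γ : Fˣ) : (if IsFreeElt e γ then (1 : ℂ) else 0) = (e.totient : ℂ) / e *
      ∑ m ∈ (radical e).divisors, (μ m : ℂ) * orderMean (mulCharEval γ) m := by
    rw [totient_div_self_mul_sum_moebius_mul_orderMean _ he (card_mulChar (F := F) ▸ heF)]
    simp only [isFreeElt_iff_forall_primeFactors he, mulCharEval_apply,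
      exists_eq_pow_iff_forall_mulChar (R := ℂ), not_forall, exists_prop, ne_eq]
    congr
  have hcard : nFree e (A : Set Fˣ) = #{γ ∈ A | IsFreeElt e γ} := by
    rw [nFree, ← Set.ncard_coe_finset, coe_filter]
    rfl
  rw [hcard, ← sum_boole, sum_congr rfl fun γ _ => hindicator γ, ← mul_sum, sum_comm]
  simp only [mul_sum]

theorem norm_sum_orderMean_le (A : Finset Fˣ) {m : ℕ} (hm : m ∣ Fintype.card F - 1) {K : ℝ}
    (hK : ∀ χ : MulChar F ℂ, orderOf χ = m → ‖∑ γ ∈ A, χ γ‖ ≤ K) :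
    ‖∑ γ ∈ A, orderMean (mulCharEval γ : MulChar F ℂ →* ℂ) m‖ ≤ K := by
  have hm0 : m ≠ 0 := ne_zero_of_dvd_ne_zero (Nat.sub_pos_of_lt Fintype.one_lt_card).ne' hm
  obtain ⟨χ, hχ⟩ := MulChar.exists_mulChar_orderOf F hm (Complex.isPrimitiveRoot_exp m hm0)
  have hne : ({χ | orderOf χ = m} : Finset (MulChar F ℂ)).Nonempty :=
    ⟨χ, (mem_filter_univ χ).2 hχ⟩
  simp only [orderMean_apply, ← expect_sum_comm, mulCharEval_apply]
  exact (RCLike.norm_expect_le (K := ℂ)).trans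
    (expect_le hne fun ψ hψ => hK ψ ((mem_filter_univ ψ).1 hψ))

theorem norm_moebius_mul_sum_orderMean_le (A : Finset Fˣ) {m : ℕ} (hm : m ∣ Fintype.card F - 1)
    {K : ℝ} (hK : ∀ χ : MulChar F ℂ, orderOf χ = m → ‖∑ γ ∈ A, χ γ‖ ≤ K) :
    ‖(μ m : ℂ) * ∑ γ ∈ A, orderMean (mulCharEval γ : MulChar F ℂ →* ℂ) m‖ ≤ K := by
  have hμ : ‖(μ m : ℂ)‖ ≤ 1 := by
    rw [Complex.norm_intCast]
    exact_mod_cast abs_moebius_le_one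
  rw [norm_mul]
  exact (mul_le_of_le_one_left (norm_nonneg _) hμ).trans (norm_sum_orderMean_le A hm hK)

theorem nFree_sub_eq_sum_moebius_mul_orderMean (A : Finset Fˣ) {d e : ℕ} (hde : d ∣ e)
    (he0 : e ≠ 0) (he : radical e ∣ Fintype.card F - 1) (hcop : d.Coprime (e / d)) :
    (nFree e (A : Set Fˣ) : ℂ) - ((e / d).totient : ℂ) / (e / d : ℕ) * nFree d (A : Set Fˣ) =
      (e.totient : ℂ) / e * ∑ m ∈ (radical e).divisors \ (radical d).divisors,
        (μ m : ℂ) * ∑ γ ∈ A, orderMean (mulCharEval γ) m := by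
  have hrad : radical d ∣ radical e := radical_dvd_radical hde he0
  have hrho := totient_div_self_mul_of_coprime (R := ℂ) hcop.symm
  rw [Nat.div_mul_cancel hde] at hrho
  rw [nFree_eq_sum_moebius_mul_orderMean A he0 he,
    nFree_eq_sum_moebius_mul_orderMean A (ne_zero_of_dvd_ne_zero he0 hde) (hrad.trans he),
    ← mul_assoc, ← hrho, ← mul_sub,
    sum_sdiff_eq_sub (Nat.divisors_subset_of_dvd radical_ne_zero hrad)]

end FreeElements

theorem stmt_3_general {F : Type*} [Field F] [Fintype F] (A : Set Fˣ) {d e : ℕ} (hde : d ∣ e)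
    (he0 : e ≠ 0) (he : radical e ∣ Fintype.card F - 1) (hcop : d.Coprime (e / d)) {K : ℝ}
    (hK : ∀ χ : MulChar F ℂ, orderOf χ ∣ radical e → ¬ orderOf χ ∣ d →
      ‖∑ᶠ γ ∈ A, χ (γ : F)‖ ≤ K) :
    |(nFree e A : ℝ) - ((e / d).totient : ℝ) / ((e / d : ℕ) : ℝ) * (nFree d A : ℝ)| ≤
      (e.totient : ℝ) / (e : ℝ) *
        ((2 : ℝ) ^ e.primeFactors.card - (2 : ℝ) ^ d.primeFactors.card) * K := by
  have := Fintype.ofFinite (MulChar F ℂ)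
  lift A to Finset Fˣ using A.toFinite
  simp only [finsum_mem_coe_finset] at hK
  have hd0 : d ≠ 0 := ne_zero_of_dvd_ne_zero he0 hde
  set D := (radical e).divisors \ (radical d).divisors with hD
  have hterm : ∀ m ∈ D, ‖(μ m : ℂ) * ∑ γ ∈ A, orderMean (mulCharEval γ) m‖ ≤ K := by
    intro m hm
    obtain ⟨hme, hmd⟩ := (mem_divisors_radical_sdiff hd0).1 hm
    refine norm_moebius_mul_sum_orderMean_le A (hme.trans he) ?_
    rintro χ rfl
    exact hK χ hme hmd
  calc
    _ = ‖(nFree e (A : Set Fˣ) : ℂ) -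
          ((e / d).totient : ℂ) / (e / d : ℕ) * nFree d (A : Set Fˣ)‖ := by
      rw [← Real.norm_eq_abs, ← Complex.norm_real]
      push_cast
      rfl
    _ = (e.totient : ℝ) / e * ‖∑ m ∈ D, (μ m : ℂ) * ∑ γ ∈ A, orderMean (mulCharEval γ) m‖ := by
      rw [nFree_sub_eq_sum_moebius_mul_orderMean A hde he0 he hcop, norm_mul, norm_div,
        Complex.norm_natCast, Complex.norm_natCast]
    _ ≤ (e.totient : ℝ) / e * (#D • K) := by
      gcongr
      exact (norm_sum_le_of_le _ hterm).trans_eq (sum_const K)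
    _ = _ := by rw [nsmul_eq_mul, hD, card_divisors_radical_sdiff hde he0, mul_assoc]

theorem stmt_3 (q r : ℕ) (hq : IsPrimePow q) (hr : 1 ≤ r)
    (F : Type*) [Field F] [Fintype F] (hF : Fintype.card F = q ^ r)
    (A : Set Fˣ) (d e : ℕ) (hde : d ∣ e) (he : e ∣ q ^ r - 1)
    (hcop : Nat.Coprime d (e / d)) (K : ℝ)
    (hK : ∀ χ : MulChar F ℂ, χ ≠ 1 → orderOf χ ∣ q ^ r - 1 →
      ‖∑ᶠ γ ∈ A, χ (γ : F)‖ ≤ K) :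
    |(nFree e A : ℝ) - ((e / d).totient : ℝ) / ((e / d : ℕ) : ℝ) * (nFree d A : ℝ)| ≤
      (e.totient : ℝ) / (e : ℝ) *
        ((2 : ℝ) ^ e.primeFactors.card - (2 : ℝ) ^ d.primeFactors.card) * K := by
  rw [← hF] at he hK
  have he0 : e ≠ 0 := ne_zero_of_dvd_ne_zero (Nat.sub_pos_of_lt Fintype.one_lt_card).ne' he
  have hrad : radical e ∣ Fintype.card F - 1 := radical_dvd_self.trans he
  exact stmt_3_general A hde he0 hrad hcop fun χ hχe hχd =>
    hK χ (by rintro rfl; simp at hχd) (hχe.trans hrad)
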